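/- Fix p ∈ (0,1) and a function f with f(n) = o(n). Let H_n be the disjoint union of the Erdős–Rényi random k-graph G^(k)(n - f(n), p) and a complete k-graph on f(n) vertices. Then for every μ > 0, with high probability H_n is (p,μ)-dense, its minimum vertex degree is C(f(n)-1, k-1), and H_n contains no Hamilton loose cycle (for n large, since the clique component is too small to be connected to the rest). -/

import Mathlib

/-- `e(X 0, …, X (k-1))`: the number of `k`-tuples from `X 0 × ⋯ × X (k-1)` forming an edge. -/
def tupleCount {V : Type*} [DecidableEq V] {k : ℕ} (H : Finset (Finset V))
    (X : Fin k → Finset V) : ℕ :=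
  ((Fintype.piFinset X).filter (fun x => Finset.image x Finset.univ ∈ H)).card

/-- `H` is `(p, μ)`-dense. -/
def IsDense {V : Type*} [Fintype V] [DecidableEq V] (k : ℕ) (H : Finset (Finset V))
    (p μ : ℝ) : Prop :=
  ∀ X : Fin k → Finset V,
    p * ∏ i, ((X i).card : ℝ) - μ * (Fintype.card V : ℝ) ^ k ≤ (tupleCount H X : ℝ)

/-- The `i`-th edge of a potential `l`-cycle in the cyclic vertex order `σ`. -/
def cycleEdge {V : Type*} [DecidableEq V] (k l n L : ℕ) (hn : 0 < n) (σ : Fin n ≃ V)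
    (i : Fin L) : Finset V :=
  Finset.image (fun j : Fin k => σ ⟨(i.val * (k - l) + j.val) % n, Nat.mod_lt _ hn⟩)
    Finset.univ

/-- `H` contains a Hamilton `l`-cycle. -/
def ContainsHamiltonCycle {V : Type*} [Fintype V] [DecidableEq V] (k l : ℕ)
    (H : Finset (Finset V)) : Prop :=
  ∃ (L : ℕ) (hL : 0 < L) (hn : 0 < Fintype.card V) (σ : Fin (Fintype.card V) ≃ V),
    Fintype.card V ∣ L * (k - l) ∧
    (∀ i : Fin L, (cycleEdge k l (Fintype.card V) L hn σ i).card = k) ∧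
    (∀ i : Fin L, (cycleEdge k l (Fintype.card V) L hn σ i ∩
      cycleEdge k l (Fintype.card V) L hn σ ⟨(i.val + 1) % L, Nat.mod_lt _ hL⟩).card = l) ∧
    (∀ x : V, ∃ i : Fin L, x ∈ cycleEdge k l (Fintype.card V) L hn σ i) ∧
    (∀ i : Fin L, cycleEdge k l (Fintype.card V) L hn σ i ∈ H)

/-- The pool of potential random edges: the `k`-subsets of the first `n - f` vertices. -/
def randomPool (n k f : ℕ) : Finset (Finset (Fin n)) :=
  (Finset.powersetCard k Finset.univ).filter (fun e => ∀ v ∈ e, v.val < n - f)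

/-- The probability weight of an outcome `ω` (a choice of which potential random edges
are present), each edge appearing independently with probability `p`. -/
noncomputable def outcomeWeight (n k f : ℕ) (p : ℝ)
    (ω : {e // e ∈ randomPool n k f} → Bool) : ℝ :=
  ∏ e : {e // e ∈ randomPool n k f}, if ω e then p else 1 - p

/-- The disjoint union of the random `k`-graph on the first `n - f` vertices determined by
`ω`, and the complete `k`-graph on the last `f` vertices. -/
def unionGraph (n k f : ℕ) (ω : {e // e ∈ randomPool n k f} → Bool) :
    Finset (Finset (Fin n)) :=
  ((randomPool n k f).attach.filter (fun e => ω e)).image Subtype.val ∪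
    (Finset.powersetCard k Finset.univ).filter (fun e => ∀ v ∈ e, n - f ≤ v.val)

/-- The probability of an event `A` in a finite weighted space. -/
noncomputable def prOf {Ω : Type*} [Fintype Ω] (w : Ω → ℝ) (A : Set Ω) : ℝ :=
  ∑ ω : Ω, A.indicator w ω

/-! The density and the degree condition follow from one Hoeffding bound for a nonnegative
weighted count of the edges of the random part. For a fixed tuple `X` of vertex sets, the weight
of a `k`-set is the number of ways to write it as a tuple of `X 0 × ⋯ × X (k-1)`, and the failure
bound `exp (-Ω(n ^ k))` beats the `2 ^ (k n)` choices of `X` because `k ≥ 2`; the tuples that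
repeat a vertex or meet the clique are only `o(n ^ k)` many. For a vertex outside the clique, the
expected degree `p * C(n - f n - 1, k - 1)` is at least linear in `n` and dwarfs the degree
`C(f n - 1, k - 1)` of the clique vertices. A Hamilton cycle would link the clique to the other
vertices through consecutive intersecting edges, but every edge lies on one side. -/

open Finset Filter MeasureTheory ProbabilityTheory Topology

section Coins

/-- The law of a family of independent coins indexed by `ι`, each showing `true` with
probability `p`. -/
noncomputable def coinMeasure (ι : Type*) [Fintype ι] (p : unitInterval) : Measure (ι → Bool) :=
  Measure.pi fun _ => bernoulliMeasure true false p

variable {ι : Type*} [Fintype ι] {p : unitInterval}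

instance : IsProbabilityMeasure (coinMeasure ι p) :=
  inferInstanceAs (IsProbabilityMeasure (Measure.pi _))

lemma coinMeasure_real_singleton (ω : ι → Bool) :
    (coinMeasure ι p).real {ω} = ∏ i, if ω i then (p : ℝ) else 1 - p := by
  rw [coinMeasure, measureReal_def, Measure.pi_singleton, ENNReal.toReal_prod]
  refine prod_congr rfl fun i _ => ?_
  rw [← measureReal_def]
  cases ω i <;> simp

lemma integral_coin (i : ι) : ∫ ω, (if ω i then 1 else 0 : ℝ) ∂coinMeasure ι p = p := by
  refine (integral_comp_eval (X := fun _ : ι => Bool)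
    (f := fun b : Bool => if b then (1 : ℝ) else 0)
    (measurable_of_finite _).aestronglyMeasurable).trans ?_
  simp [integral_bernoulliMeasure]

lemma hasSubgaussianMGF_mono {Ω : Type*} [MeasurableSpace Ω] {P : Measure Ω} {X : Ω → ℝ}
    {c d : NNReal} (hX : HasSubgaussianMGF X c P) (hcd : c ≤ d) : HasSubgaussianMGF X d P :=
  ⟨hX.integrable_exp_mul, fun t => (hX.mgf_le t).trans (by gcongr)⟩

lemma hasSubgaussianMGF_coin (a : ℝ) (i : ι) :
    HasSubgaussianMGF (fun ω => a * ((if ω i then 1 else 0) - p))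
      (Real.toNNReal (a ^ 2 / 4)) (coinMeasure ι p) := by
  have h : HasSubgaussianMGF (fun ω : ι → Bool => (if ω i then 1 else 0 : ℝ) - p)
      ((‖(1 : ℝ) - 0‖₊ / 2) ^ 2) (coinMeasure ι p) := by
    rw [← integral_coin (p := p) i]
    exact hasSubgaussianMGF_of_mem_Icc (measurable_of_finite _).aemeasurable
      (ae_of_all _ fun ω => by split_ifs <;> simp)
  refine hasSubgaussianMGF_mono (h.const_mul a) (NNReal.coe_le_coe.1 (le_of_eq ?_))
  rw [Real.coe_toNNReal _ (by positivity)]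
  change a ^ 2 * (‖(1 : ℝ) - 0‖ / 2) ^ 2 = a ^ 2 / 4
  norm_num [div_eq_mul_inv]

lemma iIndepFun_coin (a : ι → ℝ) :
    iIndepFun (fun i (ω : ι → Bool) => a i * ((if ω i then 1 else 0) - p)) (coinMeasure ι p) :=
  iIndepFun_pi (X := fun i (b : Bool) => a i * ((if b then 1 else 0) - (p : ℝ)))
    fun _ => (measurable_of_finite _).aemeasurable

lemma coinMeasure_real_sum_le_le_exp (a : ι → ℝ) {c t : ℝ} (hc : ∑ i, a i ^ 2 ≤ c) (ht : 0 ≤ t) :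
    (coinMeasure ι p).real {ω | ∑ i with ω i, a i ≤ p * ∑ i, a i - t} ≤
      Real.exp (-(2 * t ^ 2 / c)) := by
  have hc₀ : 0 ≤ c := (sum_nonneg fun i _ => sq_nonneg (a i)).trans hc
  have hsub : HasSubgaussianMGF (fun ω => ∑ i, -a i * ((if ω i then 1 else 0) - p))
      (Real.toNNReal (c / 4)) (coinMeasure ι p) := by
    refine hasSubgaussianMGF_mono (HasSubgaussianMGF.sum_of_iIndepFun (iIndepFun_coin _)
      fun i _ => hasSubgaussianMGF_coin (-a i) i) ?_
    rw [← Real.toNNReal_sum_of_nonneg fun i _ => by positivity]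
    simp only [neg_sq, ← sum_div]
    gcongr
  have hset : {ω : ι → Bool | ∑ i with ω i, a i ≤ p * ∑ i, a i - t} =
      {ω | t ≤ ∑ i, -a i * ((if ω i then 1 else 0) - p)} := by
    have hsum (ω : ι → Bool) : ∑ i, -a i * ((if ω i then 1 else 0) - p) =
        p * ∑ i, a i - ∑ i with ω i, a i := by
      simp only [sum_filter, mul_sum, ← sum_sub_distrib]
      refine sum_congr rfl fun i _ => ?_
      split_ifs <;> ring
    simp only [hsum, le_sub_comm]
  rw [hset]
  refine (hsub.measure_ge_le ht).trans_eq ?_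
  rw [Real.coe_toNNReal _ (by positivity)]
  congr 1
  ring

end Coins

section Whp

/-- The events `E n` hold with high probability under the laws `P n`. The limit is taken for the
complements, so that the union bound applies without any measurability assumption. -/
def HoldsWhp {Ω : ℕ → Type*} [∀ n, MeasurableSpace (Ω n)] (P : ∀ n, Measure (Ω n))
    (E : ∀ n, Set (Ω n)) : Prop :=
  Tendsto (fun n => (P n).real (E n)ᶜ) atTop (𝓝 0)

namespace HoldsWhp

variable {Ω : ℕ → Type*} [∀ n, MeasurableSpace (Ω n)] {P : ∀ n, Measure (Ω n)}
  {E F : ∀ n, Set (Ω n)}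

lemma of_eventually_le {u : ℕ → ℝ} (hu : Tendsto u atTop (𝓝 0))
    (hE : ∀ᶠ n in atTop, (P n).real (E n)ᶜ ≤ u n) : HoldsWhp P E :=
  squeeze_zero' (.of_forall fun _ => measureReal_nonneg) hE hu

lemma inter (hE : HoldsWhp P E) (hF : HoldsWhp P F) : HoldsWhp P fun n => E n ∩ F n := by
  refine of_eventually_le (by simpa using Tendsto.add hE hF) (.of_forall fun n => ?_)
  rw [Set.compl_inter]
  exact measureReal_union_le _ _

lemma mono [∀ n, IsFiniteMeasure (P n)] (hE : HoldsWhp P E)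
    (hEF : ∀ᶠ n in atTop, E n ⊆ F n) : HoldsWhp P F :=
  of_eventually_le hE (hEF.mono fun _ h => measureReal_mono (Set.compl_subset_compl.2 h))

lemma tendsto_one [∀ n, IsProbabilityMeasure (P n)] (hE : HoldsWhp P E)
    (hmeas : ∀ n, MeasurableSet (E n)) : Tendsto (fun n => (P n).real (E n)) atTop (𝓝 1) := by
  have hlim := Tendsto.const_sub 1 hE
  simpa only [probReal_compl_eq_one_sub (hmeas _), sub_sub_cancel, sub_zero] using hlim

end HoldsWhp

end Whp

section TupleCount

variable {V : Type*} [DecidableEq V] {k : ℕ}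

lemma tupleCount_eq_sum_singleton (H : Finset (Finset V)) (X : Fin k → Finset V) :
    tupleCount H X = ∑ e ∈ H, tupleCount {e} X := by
  refine (card_eq_sum_card_fiberwise (f := fun x => univ.image x)
    fun x hx => (mem_filter.1 hx).2).trans (sum_congr rfl fun e he => ?_)
  rw [filter_filter, tupleCount]
  exact congrArg card (filter_congr fun x _ => by
    rw [mem_singleton]
    exact and_iff_right_of_imp fun h : univ.image x = e => (h ▸ he : univ.image x ∈ H))

lemma tupleCount_singleton_le (e : Finset V) (X : Fin k → Finset V) :
    tupleCount {e} X ≤ #e ^ k := by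
  rw [← Fintype.card_piFinset_const e k, tupleCount]
  refine card_le_card fun x hx => Fintype.mem_piFinset.2 fun i => ?_
  rw [← mem_singleton.1 (mem_filter.1 hx).2]
  exact mem_image_of_mem x (mem_univ i)

variable [Fintype V]

lemma tupleCount_le_card_pow (H : Finset (Finset V)) (X : Fin k → Finset V) :
    tupleCount H X ≤ Fintype.card V ^ k := by
  refine (card_le_univ _).trans_eq ?_
  rw [Fintype.card_fun, Fintype.card_fin]

lemma card_filter_apply_mem_le {ι : Type*} [Fintype ι] [DecidableEq ι] (i : ι)
    (D : ({j // j ≠ i} → V) → Finset V) {m : ℕ} (hD : ∀ y, #(D y) ≤ m) :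
    #{x : ι → V | x i ∈ D fun j => x j} ≤ m * Fintype.card V ^ (Fintype.card ι - 1) := by
  have hfiber (y : {j // j ≠ i} → V) :
      #{x ∈ ({x : ι → V | x i ∈ D fun j => x j} : Finset _) | (fun j : {j // j ≠ i} => x j) = y}
        ≤ m := by
    refine (card_le_card_of_injOn (fun x => x i) ?_ ?_).trans (hD y)
    · intro x hx
      obtain ⟨hxD, rfl⟩ := mem_filter.1 hx
      exact (mem_filter.1 hxD).2
    · intro x hx z hz hxz
      have hrest := (mem_filter.1 hx).2.trans (mem_filter.1 hz).2.symm
      funext j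
      by_cases hj : j = i
      · exact hj ▸ hxz
      · exact congrFun hrest ⟨j, hj⟩
  calc
    _ ≤ m * #(univ : Finset ({j // j ≠ i} → V)) :=
      card_le_mul_card_image_of_maps_to (fun _ _ => mem_univ _) m fun y _ => hfiber y
    _ = _ := by simp [Fintype.card_subtype_compl]

lemma prod_card_le_tupleCount_add (s : Finset V) (X : Fin k → Finset V) :
    ∏ i, #(X i) ≤ tupleCount (powersetCard k sᶜ) X + k * ((#s + k) * Fintype.card V ^ (k - 1)) := by
  let D (i : Fin k) (y : {j // j ≠ i} → V) : Finset V := s ∪ univ.image y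
  let B (i : Fin k) : Finset (Fin k → V) := {x | x i ∈ D i fun j => x j}
  have hB (i : Fin k) : #(B i) ≤ (#s + k) * Fintype.card V ^ (k - 1) := by
    refine (card_filter_apply_mem_le i (D i) fun y => (card_union_le _ _).trans
      (Nat.add_le_add_left (card_image_le.trans ?_) _)).trans_eq (by rw [Fintype.card_fin])
    simp [Fintype.card_subtype_compl]
  have hcover : Fintype.piFinset X ⊆
      {x ∈ Fintype.piFinset X | univ.image x ∈ powersetCard k sᶜ} ∪ univ.biUnion B := by
    intro x hx
    by_contra hxB
    simp only [mem_union, mem_filter, hx, true_and, mem_biUnion, mem_univ, B, D, mem_image,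
      not_or, not_exists] at hxB
    obtain ⟨hedge, hgood⟩ := hxB
    have hinj : Function.Injective x := fun i j hij =>
      by_contra fun hne => (hgood j).2 ⟨i, hne⟩ hij
    refine hedge (mem_powersetCard.2 ⟨fun v hv => ?_, ?_⟩)
    · obtain ⟨i, -, rfl⟩ := mem_image.1 hv
      exact mem_compl.2 (hgood i).1
    · rw [card_image_of_injective _ hinj, card_univ, Fintype.card_fin]
  calc ∏ i, #(X i) = #(Fintype.piFinset X) := (Fintype.card_piFinset X).symm
    _ ≤ _ := (card_le_card hcover).trans (card_union_le _ _)
    _ ≤ _ := by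
      refine Nat.add_le_add_left (card_biUnion_le.trans ?_) _
      simpa using sum_le_card_nsmul univ (fun i => #(B i)) _ fun i _ => hB i

lemma isDense_of_tupleCount_powersetCard_le {H : Finset (Finset V)} {s : Finset V} {p μ ν : ℝ}
    (hp : 0 ≤ p) (hp1 : p ≤ 1) (hk : 1 ≤ k) (hs : (k * (#s + k) : ℝ) ≤ μ * Fintype.card V)
    (hH : ∀ X : Fin k → Finset V, p * tupleCount (powersetCard k sᶜ) X -
      ν * Fintype.card V ^ k ≤ tupleCount H X) :
    IsDense k H p (μ + ν) := by
  intro X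
  set N : ℝ := (Fintype.card V : ℝ)
  have hprod : (∏ i, #(X i) : ℝ) ≤ tupleCount (powersetCard k sᶜ) X + μ * N ^ k := by
    have hcast : (∏ i, #(X i) : ℝ) ≤
        tupleCount (powersetCard k sᶜ) X + k * ((#s + k) * N ^ (k - 1)) := by
      simp only [N]
      exact_mod_cast prod_card_le_tupleCount_add s X
    calc (∏ i, #(X i) : ℝ) ≤ tupleCount (powersetCard k sᶜ) X + k * (#s + k) * N ^ (k - 1) := by
          rwa [mul_assoc]
      _ ≤ tupleCount (powersetCard k sᶜ) X + μ * N * N ^ (k - 1) := by gcongr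
      _ = _ := by rw [mul_assoc, mul_pow_sub_one (by lia)]
  have hμ : 0 ≤ μ * N ^ k := by
    rw [← mul_pow_sub_one (by lia) N, ← mul_assoc]
    exact mul_nonneg ((by positivity : (0 : ℝ) ≤ k * (#s + k)).trans hs) (by positivity)
  linarith [hH X, mul_le_mul_of_nonneg_left hprod hp, mul_le_of_le_one_left hμ hp1]

end TupleCount

section HamiltonCycle

variable {V : Type*} [Fintype V] [DecidableEq V]

lemma not_containsHamiltonCycle_of_forall_subset_or_disjoint {k l : ℕ} (hl : 1 ≤ l)
    {H : Finset (Finset V)} {s : Finset V} (hH : ∀ e ∈ H, e ⊆ s ∨ Disjoint e s)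
    (hs : s.Nonempty) (hsc : sᶜ.Nonempty) : ¬ ContainsHamiltonCycle k l H := by
  rintro ⟨L, hL, hn, σ, -, -, hinter, hcover, hmem⟩
  set E : Fin L → Finset V := cycleEdge k l (Fintype.card V) L hn σ
  have subset_iff (i : Fin L) {v : V} (hv : v ∈ E i) : E i ⊆ s ↔ v ∈ s :=
    ⟨fun h => h hv, fun hvs => (hH _ (hmem i)).resolve_right fun h => disjoint_left.1 h hv hvs⟩
  have subset_iff_next (i : Fin L) : E i ⊆ s ↔ E ⟨(i + 1) % L, Nat.mod_lt _ hL⟩ ⊆ s := by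
    obtain ⟨v, hv⟩ := card_pos.1 (hl.trans_eq (hinter i).symm)
    rw [mem_inter] at hv
    rw [subset_iff _ hv.1, subset_iff _ hv.2]
  have subset_iff_first (m : ℕ) (hm : m < L) : E ⟨m, hm⟩ ⊆ s ↔ E ⟨0, hL⟩ ⊆ s := by
    induction m with
    | zero => rfl
    | succ m ih =>
      rw [← ih (by lia), subset_iff_next ⟨m, _⟩]
      simp only [Nat.mod_eq_of_lt hm]
  obtain ⟨v, hv⟩ := hs
  obtain ⟨w, hw⟩ := hsc
  obtain ⟨i, hvi⟩ := hcover v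
  obtain ⟨j, hwj⟩ := hcover w
  refine mem_compl.1 hw ((subset_iff j hwj).1 ?_)
  exact (subset_iff_first j j.2).2 ((subset_iff_first i i.2).1 ((subset_iff i hvi).2 hv))

end HamiltonCycle

section Asymptotics

lemma eventually_add_le_mul {f : ℕ → ℕ} (hf : Tendsto (fun n => (f n : ℝ) / n) atTop (𝓝 0))
    (c : ℝ) {ε : ℝ} (hε : 0 < ε) : ∀ᶠ n : ℕ in atTop, f n + c ≤ ε * n := by
  have hlim : Tendsto (fun n : ℕ => (f n : ℝ) / n + c / n) atTop (𝓝 0) := by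
    simpa using hf.add (tendsto_const_div_atTop_nhds_zero_nat c)
  filter_upwards [hlim.eventually_le_const hε, eventually_gt_atTop 0] with n hn hn₀
  rwa [← add_div, div_le_iff₀ (by positivity)] at hn

lemma mul_choose_le_mul_choose {a b j : ℕ} (hab : a ≤ b) (hj : 1 ≤ j) :
    b * a.choose j ≤ a * b.choose j := by
  obtain ⟨j, rfl⟩ := Nat.exists_eq_add_of_le' hj
  rcases a with - | a
  · simp
  obtain ⟨b, rfl⟩ := Nat.exists_eq_add_of_le' ((Nat.le_add_left 1 a).trans hab)
  refine Nat.le_of_mul_le_mul_right ?_ j.succ_pos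
  calc (b + 1) * (a + 1).choose (j + 1) * (j + 1)
      = (b + 1) * ((a + 1) * a.choose j) := by rw [mul_assoc, ← Nat.add_one_mul_choose_eq]
    _ ≤ (b + 1) * ((a + 1) * b.choose j) := by gcongr; lia
    _ = (a + 1) * (b + 1).choose (j + 1) * (j + 1) := by
      rw [mul_assoc, ← Nat.add_one_mul_choose_eq]; ring

lemma le_mul_choose {b j : ℕ} (hjb : j ≤ b) (hj : 1 ≤ j) : b ≤ j * b.choose j := by
  simpa using mul_choose_le_mul_choose hjb hj

lemma eventually_le_two_mul_sub {f : ℕ → ℕ}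
    (hf : Tendsto (fun n => (f n : ℝ) / n) atTop (𝓝 0)) (c : ℕ) :
    ∀ᶠ n in atTop, n ≤ 2 * (n - f n - c) := by
  filter_upwards [eventually_add_le_mul hf c one_half_pos] with n hn
  have htwice : 2 * (f n + c : ℝ) ≤ n := by linarith
  norm_cast at htwice
  lia

lemma eventually_choose_le_mul_choose {f : ℕ → ℕ}
    (hf : Tendsto (fun n => (f n : ℝ) / n) atTop (𝓝 0)) {ε : ℝ} (hε : 0 < ε) {j : ℕ}
    (hj : 1 ≤ j) : ∀ᶠ n in atTop, ((f n - 1).choose j : ℝ) ≤ ε * (n - f n - 1).choose j := by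
  filter_upwards [eventually_add_le_mul hf 0 (half_pos hε), eventually_le_two_mul_sub hf 1,
    eventually_gt_atTop 0] with n hfε hn hn₀
  set b := n - f n - 1
  have hab : f n - 1 ≤ b := by lia
  have hb : (0 : ℝ) < b := Nat.cast_pos.2 (by lia)
  refine le_of_mul_le_mul_left ?_ hb
  calc (b : ℝ) * (f n - 1).choose j ≤ (f n - 1 : ℕ) * b.choose j := by
        exact_mod_cast mul_choose_le_mul_choose hab hj
    _ ≤ ε * b * b.choose j := by
      have hfb : ((f n - 1 : ℕ) : ℝ) ≤ f n := by exact_mod_cast Nat.sub_le _ _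
      have hnb : (n : ℝ) ≤ 2 * b := by exact_mod_cast hn
      gcongr
      linarith [mul_le_mul_of_nonneg_left hnb hε.le]
    _ = b * (ε * b.choose j) := by ring

lemma eventually_le_mul_choose {f : ℕ → ℕ}
    (hf : Tendsto (fun n => (f n : ℝ) / n) atTop (𝓝 0)) {j : ℕ} (hj : 1 ≤ j) :
    ∀ᶠ n in atTop, n ≤ 2 * j * (n - f n - 1).choose j := by
  filter_upwards [eventually_le_two_mul_sub hf 1, eventually_ge_atTop (2 * j)] with n hn hjn
  rw [mul_assoc]
  exact hn.trans (Nat.mul_le_mul_left 2 (le_mul_choose (by lia) hj))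

lemma tendsto_two_pow_pow_mul_exp {k : ℕ} (hk : 2 ≤ k) {c : ℝ} (hc : 0 < c) :
    Tendsto (fun n : ℕ => ((2 : ℝ) ^ n) ^ k * Real.exp (-(c * n ^ k))) atTop (𝓝 0) := by
  have hbase : Tendsto (fun n : ℕ => (2 : ℝ) ^ k * Real.exp (-(c * n))) atTop (𝓝 0) := by
    simpa using (Real.tendsto_exp_neg_atTop_nhds_zero.comp
      (tendsto_natCast_atTop_atTop.const_mul_atTop hc)).const_mul ((2 : ℝ) ^ k)
  refine squeeze_zero' (.of_forall fun n => by positivity) ?_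
    (tendsto_pow_atTop_nhds_zero_of_lt_one one_half_pos.le one_half_lt_one)
  filter_upwards [hbase.eventually_le_const one_half_pos, eventually_ge_atTop 1] with n hn hn₁
  have hpow : (n : ℝ) ^ 2 ≤ n ^ k := pow_le_pow_right₀ (by exact_mod_cast hn₁) hk
  calc ((2 : ℝ) ^ n) ^ k * Real.exp (-(c * n ^ k))
      ≤ (2 ^ n) ^ k * Real.exp (-(c * n ^ 2)) := by gcongr
    _ = (2 ^ k * Real.exp (-(c * n))) ^ n := by
      rw [mul_pow, ← pow_mul, ← pow_mul, mul_comm n k, ← Real.exp_nat_mul]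
      ring_nf
    _ ≤ (1 / 2) ^ n := by gcongr

end Asymptotics

section UnionGraph

/-- The vertex set of the complete part of `unionGraph n k f`: the last `f` of the `n` vertices. -/
def cliqueVertices (n f : ℕ) : Finset (Fin n) := {v | n - f ≤ v.val}

variable {n k f : ℕ}

lemma mem_cliqueVertices {v : Fin n} : v ∈ cliqueVertices n f ↔ n - f ≤ v := by
  simp [cliqueVertices]

lemma card_compl_cliqueVertices : #(cliqueVertices n f)ᶜ = n - f := by
  have hcompl : (cliqueVertices n f)ᶜ = ({v : Fin n | v < n - f} : Finset (Fin n)) := by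
    ext v
    simp [mem_cliqueVertices, Nat.lt_sub_iff_add_lt]
  rw [hcompl, Fin.card_filter_val_lt, min_eq_right (Nat.sub_le n f)]

lemma card_cliqueVertices : #(cliqueVertices n f) = min n f := by
  rw [← compl_compl (cliqueVertices n f), card_compl, card_compl_cliqueVertices, Fintype.card_fin,
    Nat.sub_sub_eq_min]

lemma randomPool_eq_powersetCard : randomPool n k f = powersetCard k (cliqueVertices n f)ᶜ := by
  ext e
  simp [randomPool, mem_powersetCard, subset_iff, mem_cliqueVertices, and_comm,
    Nat.lt_sub_iff_add_lt]

lemma mem_unionGraph {ω : {e // e ∈ randomPool n k f} → Bool} {e : Finset (Fin n)} :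
    e ∈ unionGraph n k f ω ↔
      (∃ he : e ∈ randomPool n k f, ω ⟨e, he⟩) ∨ e ∈ powersetCard k (cliqueVertices n f) := by
  simp [unionGraph, mem_powersetCard, subset_iff, mem_cliqueVertices, and_comm]

lemma subset_or_disjoint_of_mem_unionGraph {ω : {e // e ∈ randomPool n k f} → Bool}
    {e : Finset (Fin n)} (he : e ∈ unionGraph n k f ω) :
    e ⊆ cliqueVertices n f ∨ Disjoint e (cliqueVertices n f) := by
  obtain ⟨he, -⟩ | he := mem_unionGraph.1 he
  · rw [randomPool_eq_powersetCard, mem_powersetCard] at he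
    exact .inr (subset_compl_iff_disjoint_right.1 he.1)
  · exact .inl (mem_powersetCard.1 he).1

lemma card_filter_mem_powersetCard {V : Type*} [DecidableEq V] {s : Finset V} {v : V}
    (hv : v ∈ s) (hk : 1 ≤ k) :
    #{e ∈ powersetCard k s | v ∈ e} = (#s - 1).choose (k - 1) := by
  simpa using
    card_filter_powersetCard_subset {v} s k (singleton_subset_iff.2 hv) (by simpa using hk)

lemma card_filter_mem_unionGraph (ω : {e // e ∈ randomPool n k f} → Bool) {v : Fin n}
    (hv : v ∈ cliqueVertices n f) (hfn : f ≤ n) (hk : 1 ≤ k) :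
    #{e ∈ unionGraph n k f ω | v ∈ e} = (f - 1).choose (k - 1) := by
  have hdeg := card_filter_mem_powersetCard hv hk
  rw [card_cliqueVertices, min_eq_right hfn] at hdeg
  rw [← hdeg]
  congr 1
  ext e
  simp only [mem_filter, mem_unionGraph, and_congr_left_iff, or_iff_right_iff_imp]
  rintro hve ⟨he, -⟩
  rw [randomPool_eq_powersetCard, mem_powersetCard] at he
  exact absurd hv (mem_compl.1 (he.1 hve))

lemma sum_le_sum_unionGraph (ω : {e // e ∈ randomPool n k f} → Bool) {w : Finset (Fin n) → ℝ}
    (hw : ∀ e, 0 ≤ w e) : ∑ e with ω e, w e ≤ ∑ e ∈ unionGraph n k f ω, w e := by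
  rw [← sum_image (f := w) Subtype.val_injective.injOn]
  refine sum_le_sum_of_subset_of_nonneg (image_subset_iff.2 fun e he => ?_) fun e _ _ => hw e
  exact mem_unionGraph.2 (.inl ⟨e.2, (mem_filter.1 he).2⟩)

lemma coinMeasure_real_sum_unionGraph_lt_le_exp {p : unitInterval} {w : Finset (Fin n) → ℝ}
    {M N δ : ℝ} (hw : ∀ e, 0 ≤ w e) (hM₀ : 0 ≤ M) (hM : ∀ e ∈ randomPool n k f, w e ≤ M)
    (hN : ∑ e ∈ randomPool n k f, w e ≤ N) (hδ : 0 ≤ δ) :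
    (coinMeasure {e // e ∈ randomPool n k f} p).real
        {ω | ∑ e ∈ unionGraph n k f ω, w e < p * ∑ e ∈ randomPool n k f, w e - δ * N} ≤
      Real.exp (-(2 * δ ^ 2 * N / M)) := by
  have hN₀ : 0 ≤ N := (sum_nonneg fun e _ => hw e).trans hN
  have hsq : ∑ e : {e // e ∈ randomPool n k f}, w e ^ 2 ≤ M * N := by
    rw [sum_coe_sort (randomPool n k f) fun e => w e ^ 2]
    refine le_trans ?_ (mul_le_mul_of_nonneg_left hN hM₀)
    rw [mul_sum]
    exact sum_le_sum fun e he => by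
      rw [sq]
      exact mul_le_mul_of_nonneg_right (hM e he) (hw e)
  calc
    _ ≤ (coinMeasure {e // e ∈ randomPool n k f} p).real {ω | ∑ e with ω e, w e ≤
          p * ∑ e : {e // e ∈ randomPool n k f}, w e - δ * N} := by
      refine measureReal_mono fun ω hω => ?_
      rw [sum_coe_sort (randomPool n k f) w]
      exact (sum_le_sum_unionGraph ω hw).trans (le_of_lt hω)
    _ ≤ Real.exp (-(2 * (δ * N) ^ 2 / (M * N))) :=
      coinMeasure_real_sum_le_le_exp _ hsq (by positivity)
    _ = _ := by
      obtain rfl | hN := eq_or_ne N 0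
      · simp
      · rw [← mul_div_mul_right (2 * δ ^ 2 * N) M hN]
        ring_nf

end UnionGraph

section WithHighProbability

variable {n k : ℕ} {p : unitInterval}

lemma prOf_outcomeWeight (n k f : ℕ) (p : unitInterval)
    (A : Set ({e // e ∈ randomPool n k f} → Bool)) :
    prOf (outcomeWeight n k f p) A = (coinMeasure {e // e ∈ randomPool n k f} p).real A := by
  classical
  calc prOf (outcomeWeight n k f p) A
      = ∑ ω with ω ∈ A, (coinMeasure {e // e ∈ randomPool n k f} p).real {ω} := by
        simp only [prOf, Set.indicator_apply, ← sum_filter, outcomeWeight,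
          coinMeasure_real_singleton]
    _ = _ := by
      rw [sum_measureReal_singleton]
      simp

lemma coinMeasure_real_tupleCount_lt_le_exp {f : ℕ} {δ : ℝ} (hδ : 0 ≤ δ)
    (X : Fin k → Finset (Fin n)) :
    (coinMeasure {e // e ∈ randomPool n k f} p).real {ω |
        (tupleCount (unionGraph n k f ω) X : ℝ) <
          p * tupleCount (randomPool n k f) X - δ * n ^ k} ≤
      Real.exp (-(2 * δ ^ 2 * n ^ k / k ^ k)) := by
  have hsum (H : Finset (Finset (Fin n))) :
      (tupleCount H X : ℝ) = ∑ e ∈ H, (tupleCount {e} X : ℝ) := by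
    exact_mod_cast tupleCount_eq_sum_singleton H X
  simp only [hsum (randomPool n k f), hsum (unionGraph n k f _)]
  refine coinMeasure_real_sum_unionGraph_lt_le_exp (fun e => by positivity) (by positivity)
    (fun e he => ?_) ?_ hδ
  · rw [randomPool_eq_powersetCard, mem_powersetCard] at he
    exact_mod_cast (tupleCount_singleton_le e X).trans_eq (by rw [he.2])
  · rw [← hsum]
    exact_mod_cast (tupleCount_le_card_pow _ X).trans_eq (by rw [Fintype.card_fin])

lemma coinMeasure_real_compl_isDense_le {f : ℕ} {μ : ℝ} (hμ : 0 ≤ μ) (hk : 1 ≤ k)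
    (hf : (k * (f + k) : ℝ) ≤ μ / 2 * n) :
    (coinMeasure {e // e ∈ randomPool n k f} p).real
        {ω | IsDense k (unionGraph n k f ω) p μ}ᶜ ≤
      (2 ^ n) ^ k * Real.exp (-(μ ^ 2 / (2 * k ^ k) * n ^ k)) := by
  set P := coinMeasure {e // e ∈ randomPool n k f} p
  let B (X : Fin k → Finset (Fin n)) : Set ({e // e ∈ randomPool n k f} → Bool) :=
    {ω | (tupleCount (unionGraph n k f ω) X : ℝ) <
      p * tupleCount (randomPool n k f) X - μ / 2 * n ^ k}
  have hB (X : Fin k → Finset (Fin n)) :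
      P.real (B X) ≤ Real.exp (-(μ ^ 2 / (2 * k ^ k) * n ^ k)) := by
    refine (coinMeasure_real_tupleCount_lt_le_exp (div_nonneg hμ zero_le_two) X).trans_eq ?_
    congr 1
    ring
  have hcover : {ω | IsDense k (unionGraph n k f ω) p μ}ᶜ ⊆ ⋃ X, B X := by
    refine Set.compl_subset_comm.1 fun ω hω => ?_
    simp only [Set.mem_compl_iff, Set.mem_iUnion, not_exists, B, Set.notMem_ofPred_iff, not_lt]
      at hω
    rw [Set.mem_ofPred_eq, ← add_halves μ]
    refine isDense_of_tupleCount_powersetCard_le (s := cliqueVertices n f) p.2.1 p.2.2 hk ?_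
      fun X => ?_
    · have hcard : (#(cliqueVertices n f) : ℝ) ≤ f := by
        exact_mod_cast card_cliqueVertices.trans_le (min_le_right n f)
      rw [Fintype.card_fin]
      exact le_trans (by gcongr) hf
    · rw [← randomPool_eq_powersetCard, Fintype.card_fin]
      exact hω X
  calc P.real {ω | IsDense k (unionGraph n k f ω) p μ}ᶜ ≤ ∑ X, P.real (B X) :=
        (measureReal_mono hcover).trans (measureReal_iUnion_fintype_le B)
    _ ≤ _ := by
      refine (sum_le_card_nsmul univ _ _ fun X _ => hB X).trans_eq ?_
      simp

lemma coinMeasure_real_card_filter_mem_lt_le {f : ℕ} {v : Fin n} (hv : v ∉ cliqueVertices n f)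
    (hk : 1 ≤ k) :
    (coinMeasure {e // e ∈ randomPool n k f} p).real {ω |
        (#{e ∈ unionGraph n k f ω | v ∈ e} : ℝ) < p / 2 * (n - f - 1).choose (k - 1)} ≤
      Real.exp (-(p ^ 2 / 2 * (n - f - 1).choose (k - 1))) := by
  have hpool : (∑ e ∈ randomPool n k f, if v ∈ e then 1 else 0 : ℝ) =
      (n - f - 1).choose (k - 1) := by
    rw [← natCast_card_filter, randomPool_eq_powersetCard,
      card_filter_mem_powersetCard (mem_compl.2 hv) hk, card_compl_cliqueVertices]
  have htail := coinMeasure_real_sum_unionGraph_lt_le_exp (p := p) (M := 1) (δ := p / 2)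
    (fun e => by split_ifs <;> simp) zero_le_one (fun e _ => by split_ifs <;> simp) hpool.le
    (div_nonneg p.2.1 zero_le_two)
  rw [hpool, ← sub_mul, sub_half] at htail
  simp only [natCast_card_filter]
  refine htail.trans_eq (congrArg Real.exp ?_)
  ring

lemma coinMeasure_real_compl_forall_choose_le_card_le {f : ℕ} (hk : 1 ≤ k) (hfn : f ≤ n)
    (hf : ((f - 1).choose (k - 1) : ℝ) ≤ p / 2 * (n - f - 1).choose (k - 1)) :
    (coinMeasure {e // e ∈ randomPool n k f} p).real
        {ω | ∀ v, (f - 1).choose (k - 1) ≤ #{e ∈ unionGraph n k f ω | v ∈ e}}ᶜ ≤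
      n * Real.exp (-(p ^ 2 / 2 * (n - f - 1).choose (k - 1))) := by
  set P := coinMeasure {e // e ∈ randomPool n k f} p
  let B (v : Fin n) : Set ({e // e ∈ randomPool n k f} → Bool) :=
    {ω | #{e ∈ unionGraph n k f ω | v ∈ e} < (f - 1).choose (k - 1)}
  have hB (v : Fin n) :
      P.real (B v) ≤ Real.exp (-(p ^ 2 / 2 * (n - f - 1).choose (k - 1))) := by
    by_cases hv : v ∈ cliqueVertices n f
    · simp only [B, card_filter_mem_unionGraph _ hv hfn hk, lt_irrefl, Set.ofPred_false,
        measureReal_empty]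
      positivity
    · refine (measureReal_mono fun ω hω => ?_).trans (coinMeasure_real_card_filter_mem_lt_le hv hk)
      exact (Nat.cast_lt.2 hω).trans_le hf
  have hcover : {ω | ∀ v, (f - 1).choose (k - 1) ≤ #{e ∈ unionGraph n k f ω | v ∈ e}}ᶜ ⊆
      ⋃ v, B v := by
    refine Set.compl_subset_comm.1 fun ω hω v => ?_
    simpa [B] using fun h => hω (Set.mem_iUnion.2 ⟨v, h⟩)
  calc _ ≤ ∑ v, P.real (B v) := (measureReal_mono hcover).trans (measureReal_iUnion_fintype_le B)
    _ ≤ _ := by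
      refine (sum_le_card_nsmul univ _ _ fun v _ => hB v).trans_eq ?_
      simp

variable {f : ℕ → ℕ}

lemma holdsWhp_isDense (hk : 2 ≤ k) (hf : Tendsto (fun n => (f n : ℝ) / n) atTop (𝓝 0))
    {μ : ℝ} (hμ : 0 < μ) :
    HoldsWhp (fun n => coinMeasure {e // e ∈ randomPool n k (f n)} p)
      fun n => {ω | IsDense k (unionGraph n k (f n) ω) p μ} := by
  have hk₀ : (0 : ℝ) < k := Nat.cast_pos.2 (by lia)
  refine .of_eventually_le (tendsto_two_pow_pow_mul_exp hk (c := μ ^ 2 / (2 * k ^ k))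
    (by positivity)) ?_
  filter_upwards [eventually_add_le_mul hf k (ε := μ / 2 / k) (by positivity)] with n hn
  refine coinMeasure_real_compl_isDense_le hμ.le (by lia) ?_
  rwa [div_mul_eq_mul_div, le_div_iff₀' hk₀] at hn

lemma holdsWhp_forall_choose_le_card (hk : 2 ≤ k) (hp : 0 < (p : ℝ))
    (hf : Tendsto (fun n => (f n : ℝ) / n) atTop (𝓝 0)) :
    HoldsWhp (fun n => coinMeasure {e // e ∈ randomPool n k (f n)} p) fun n =>
      {ω | ∀ v, (f n - 1).choose (k - 1) ≤ #{e ∈ unionGraph n k (f n) ω | v ∈ e}} := by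
  have hk₁ : 1 ≤ k - 1 := by lia
  have hk₀ : (0 : ℝ) < (k - 1 : ℕ) := Nat.cast_pos.2 hk₁
  refine .of_eventually_le (tendsto_self_mul_const_pow_of_lt_one
    (r := Real.exp (-(p ^ 2 / (4 * (k - 1 : ℕ))))) (by positivity)
    (Real.exp_lt_one_iff.2 (neg_lt_zero.2 (div_pos (pow_pos hp 2) (mul_pos four_pos hk₀))))) ?_
  filter_upwards [eventually_choose_le_mul_choose hf (half_pos hp) hk₁,
    eventually_le_mul_choose hf hk₁, eventually_add_le_mul hf 0 zero_lt_one] with n hchoose hn hfn₀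
  have hfn : f n ≤ n := by simpa using hfn₀
  refine (coinMeasure_real_compl_forall_choose_le_card_le (by lia) hfn hchoose).trans ?_
  rw [← Real.exp_nat_mul]
  gcongr
  have hnD : (n : ℝ) ≤ 2 * (k - 1 : ℕ) * (n - f n - 1).choose (k - 1) := by exact_mod_cast hn
  rw [mul_neg, neg_le_neg_iff]
  calc (n : ℝ) * (p ^ 2 / (4 * (k - 1 : ℕ)))
      ≤ 2 * (k - 1 : ℕ) * (n - f n - 1).choose (k - 1) * (p ^ 2 / (4 * (k - 1 : ℕ))) := by
        gcongr
    _ = (p : ℝ) ^ 2 / 2 * (n - f n - 1).choose (k - 1) := by field_simp; ring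

end WithHighProbability

theorem stmt_9_general (k l : ℕ) (hl : 1 ≤ l) (hlk : l < k) (p : ℝ) (hp : 0 < p) (hp1 : p ≤ 1)
    (f : ℕ → ℕ) (hf1 : ∀ n, 1 ≤ f n) (hf : Tendsto (fun n => (f n : ℝ) / (n : ℝ)) atTop (𝓝 0))
    (μ : ℝ) (hμ : 0 < μ) :
    Tendsto
      (fun n => prOf (outcomeWeight n k (f n) p)
        {ω | IsDense k (unionGraph n k (f n) ω) p μ ∧
          (∀ v : Fin n, (f n - 1).choose (k - 1) ≤ #{e ∈ unionGraph n k (f n) ω | v ∈ e}) ∧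
          (∃ v : Fin n, #{e ∈ unionGraph n k (f n) ω | v ∈ e} = (f n - 1).choose (k - 1)) ∧
          ¬ ContainsHamiltonCycle k l (unionGraph n k (f n) ω)})
      atTop (𝓝 1) := by
  lift p to unitInterval using ⟨hp.le, hp1⟩
  have hk : 2 ≤ k := by lia
  simp only [prOf_outcomeWeight]
  refine (((holdsWhp_isDense hk hf hμ).inter (holdsWhp_forall_choose_le_card hk hp hf)).mono
    ?_).tendsto_one fun n => (Set.toFinite _).measurableSet
  filter_upwards [eventually_le_two_mul_sub hf 0, eventually_gt_atTop 0] with n hn hn₀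
  rintro ω ⟨hdense, hdeg⟩
  have hclique : (⟨n - 1, by lia⟩ : Fin n) ∈ cliqueVertices n (f n) :=
    mem_cliqueVertices.2 (Nat.sub_le_sub_left (hf1 n) n)
  have hcompl : (⟨0, hn₀⟩ : Fin n) ∈ (cliqueVertices n (f n))ᶜ :=
    mem_compl.2 fun h => by have := mem_cliqueVertices.1 h; lia
  exact ⟨hdense, hdeg, ⟨_, card_filter_mem_unionGraph ω hclique (by lia) (by lia)⟩,
    not_containsHamiltonCycle_of_forall_subset_or_disjoint hl
      (fun e => subset_or_disjoint_of_mem_unionGraph) ⟨_, hclique⟩ ⟨_, hcompl⟩⟩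

/-- Fix `k ≥ 2`, `p ∈ (0,1)` and `f` with `1 ≤ f n` and `f n = o(n)`.
Let `H n` be the disjoint union of the random `k`-graph `G^(k)(n - f n, p)` and a complete
`k`-graph on `f n` vertices.  Then for every `μ > 0`, with high probability (probability
tending to `1` as `n → ∞`): `H n` is `(p, μ)`-dense, its minimum vertex degree is
`C(f n - 1, k - 1)`, and `H n` contains no Hamilton loose (1-)cycle. -/
theorem stmt_9 (k : ℕ) (hk : 2 ≤ k) (p : ℝ) (hp : 0 < p) (hp1 : p < 1)
    (f : ℕ → ℕ) (hf1 : ∀ n, 1 ≤ f n)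
    (hf : Filter.Tendsto (fun n => (f n : ℝ) / (n : ℝ)) Filter.atTop (nhds 0))
    (μ : ℝ) (hμ : 0 < μ) :
    Filter.Tendsto
      (fun n => prOf (outcomeWeight n k (f n) p)
        {ω | IsDense k (unionGraph n k (f n) ω) p μ ∧
          (∀ v : Fin n, Nat.choose (f n - 1) (k - 1) ≤
            ((unionGraph n k (f n) ω).filter (fun e => v ∈ e)).card) ∧
          (∃ v : Fin n, ((unionGraph n k (f n) ω).filter (fun e => v ∈ e)).card =
            Nat.choose (f n - 1) (k - 1)) ∧
          ¬ ContainsHamiltonCycle k 1 (unionGraph n k (f n) ω)})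
      Filter.atTop (nhds 1) := by
  exact stmt_9_general k 1 le_rfl hk p hp hp1.le f hf1 hf μ hμ
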